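/- Let M be a category with all small limits and let B be a restricted cosimplicial object in M (a functor Δ_res → M, where Δ_res is the subcategory of Δ with only strictly monotone maps). Then the limit of B over Δ_res is naturally isomorphic to the equalizer of the two coface maps d^0, d^1 : B^0 → B^1. -/

import Mathlib

/-!
STATEMENT 1: For a category M with all small limits and a restricted
cosimplicial object B in M (a functor Δ_res → M, where Δ_res ⊆ Δ has only the
strictly monotone, i.e. injective order-preserving / mono, maps), the limit of
B over Δ_res is naturally isomorphic to the equalizer of the two coface maps
d⁰, d¹ : B⁰ → B¹.
-/

open CategoryTheory CategoryTheory.Limits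

/-- The restricted simplex category `Δ_res`: the wide subcategory of the
simplex category whose morphisms are the monomorphisms (equivalently the
strictly monotone maps). -/
def DeltaRes : Type :=
  WideSubcategory (MorphismProperty.monomorphisms SimplexCategory)

instance : Category DeltaRes :=
  inferInstanceAs
    (Category (WideSubcategory (MorphismProperty.monomorphisms SimplexCategory)))

/-- The object `[n]` of `Δ_res`. -/
def DeltaRes.mk (n : ℕ) : DeltaRes :=
  WideSubcategory.mk (SimplexCategory.mk n)

/-- The coface map `δ i` as a morphism of `Δ_res`. -/
def DeltaRes.δ {n : ℕ} (i : Fin (n + 2)) : DeltaRes.mk n ⟶ DeltaRes.mk (n + 1) :=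
  ⟨SimplexCategory.δ i, inferInstanceAs (Mono (SimplexCategory.δ i))⟩

namespace DeltaRes

/-- The number `n` with `X = [n]`. -/
def len (X : DeltaRes) : ℕ := (show WideSubcategory _ from X).obj.len

/-- The vertex maps `[0] ⟶ X`. -/
def vert (X : DeltaRes) (i : Fin (X.len + 1)) : DeltaRes.mk 0 ⟶ X :=
  ⟨SimplexCategory.const (SimplexCategory.mk 0) _ i, by
    refine SimplexCategory.mono_iff_injective.mpr ?_
    intro a b _
    exact Subsingleton.elim (α := Fin 1) a b⟩

/-- The edge maps `[1] ⟶ X`. -/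
def edge (X : DeltaRes) (i j : Fin (X.len + 1)) (h : i < j) : DeltaRes.mk 1 ⟶ X :=
  ⟨SimplexCategory.mkOfLe i j h.le, by
    refine SimplexCategory.mono_iff_injective.mpr ?_
    intro a b hab
    change Fin 2 at a b
    fin_cases a <;> fin_cases b
    · rfl
    · exact absurd hab h.ne
    · exact absurd hab h.ne'
    · rfl⟩

theorem hom_ext_aux {X Y : DeltaRes} (f g : X ⟶ Y) (h : f.1 = g.1) : f = g :=
  InducedWideCategory.Hom.ext h

theorem δ0_edge (X : DeltaRes) (i j : Fin (X.len + 1)) (h : i < j) :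
    DeltaRes.δ (0 : Fin 2) ≫ X.edge i j h = X.vert j := by
  apply hom_ext_aux
  ext a
  change Fin 1 at a
  fin_cases a
  rfl

theorem δ1_edge (X : DeltaRes) (i j : Fin (X.len + 1)) (h : i < j) :
    DeltaRes.δ (1 : Fin 2) ≫ X.edge i j h = X.vert i := by
  apply hom_ext_aux
  ext a
  change Fin 1 at a
  fin_cases a
  rfl

theorem eq_vert {X : DeltaRes} (f : DeltaRes.mk 0 ⟶ X) : ∃ i, f = X.vert i := by
  refine ⟨f.1.toOrderHom (0 : Fin 1), ?_⟩
  apply hom_ext_aux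
  ext a
  change Fin 1 at a
  fin_cases a
  rfl

theorem vert_zero : (DeltaRes.mk 0).vert (0 : Fin 1) = 𝟙 _ := by
  apply hom_ext_aux
  ext a
  change Fin 1 at a
  fin_cases a
  rfl

variable {M : Type*} [Category M]

theorem map_eq (B : DeltaRes ⥤ M) {E : M} (x : E ⟶ B.obj (DeltaRes.mk 0))
    (hx : x ≫ B.map (DeltaRes.δ (0 : Fin 2)) = x ≫ B.map (DeltaRes.δ (1 : Fin 2)))
    {X : DeltaRes} (f g : DeltaRes.mk 0 ⟶ X) : x ≫ B.map f = x ≫ B.map g := by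
  have key : ∀ i j (_ : i < j), x ≫ B.map (X.vert j) = x ≫ B.map (X.vert i) := by
    intro i j h
    rw [← X.δ0_edge i j h, ← X.δ1_edge i j h, B.map_comp, B.map_comp, ← Category.assoc, hx,
      Category.assoc]
  obtain ⟨i, rfl⟩ := eq_vert f
  obtain ⟨j, rfl⟩ := eq_vert g
  rcases lt_trichotomy i j with h | h | h
  · exact (key _ _ h).symm
  · rw [h]
  · exact key _ _ h

/-- The cone over `B` given by a map equalizing `d⁰` and `d¹`. -/
def coneOf (B : DeltaRes ⥤ M) {E : M} (x : E ⟶ B.obj (DeltaRes.mk 0))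
    (hx : x ≫ B.map (DeltaRes.δ (0 : Fin 2)) = x ≫ B.map (DeltaRes.δ (1 : Fin 2))) : Cone B where
  pt := E
  π :=
    { app := fun X => x ≫ B.map (X.vert 0)
      naturality := fun X Y f => by
        dsimp
        rw [Category.id_comp, Category.assoc, ← B.map_comp]
        exact map_eq B x hx _ _ }

/-- The map into the limit given by a map equalizing `d⁰` and `d¹`. -/
noncomputable def liftOf [HasLimits M] (B : DeltaRes ⥤ M) {E : M}
    (x : E ⟶ B.obj (DeltaRes.mk 0))
    (hx : x ≫ B.map (DeltaRes.δ (0 : Fin 2)) = x ≫ B.map (DeltaRes.δ (1 : Fin 2))) :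
    E ⟶ limit B :=
  limit.lift B (coneOf B x hx)

theorem liftOf_π [HasLimits M] (B : DeltaRes ⥤ M) {E : M}
    (x : E ⟶ B.obj (DeltaRes.mk 0))
    (hx : x ≫ B.map (DeltaRes.δ (0 : Fin 2)) = x ≫ B.map (DeltaRes.δ (1 : Fin 2)))
    (X : DeltaRes) : liftOf B x hx ≫ limit.π B X = x ≫ B.map (X.vert 0) :=
  limit.lift_π (coneOf B x hx) X

/-- The isomorphism for one `B`. -/
noncomputable def isoEq [HasLimits M] (B : DeltaRes ⥤ M) :
    limit B ≅ equalizer (B.map (DeltaRes.δ (0 : Fin 2))) (B.map (DeltaRes.δ (1 : Fin 2))) where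
  hom := equalizer.lift (limit.π B (DeltaRes.mk 0)) (by rw [limit.w, limit.w])
  inv := liftOf B (equalizer.ι _ _) (equalizer.condition _ _)
  hom_inv_id := by
    apply limit.hom_ext
    intro X
    rw [Category.assoc, liftOf_π, equalizer.lift_ι_assoc, limit.w, Category.id_comp]
  inv_hom_id := by
    apply equalizer.hom_ext
    rw [Category.assoc, equalizer.lift_ι, liftOf_π, Category.id_comp]
    change equalizer.ι _ _ ≫ B.map ((DeltaRes.mk 0).vert (0 : Fin 1)) = _
    rw [vert_zero, B.map_id, Category.comp_id]

end DeltaRes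

theorem statement1 {M : Type*} [Category M] [HasLimits M] :
    ∃ e : ∀ B : DeltaRes ⥤ M,
        limit B ≅ equalizer (B.map (DeltaRes.δ (0 : Fin 2))) (B.map (DeltaRes.δ (1 : Fin 2))),
      -- naturality of the isomorphism in `B`
      ∀ {B B' : DeltaRes ⥤ M} (η : B ⟶ B'),
        limMap η ≫ (e B').hom =
          (e B).hom ≫
            equalizer.lift
              (equalizer.ι (B.map (DeltaRes.δ (0 : Fin 2))) (B.map (DeltaRes.δ (1 : Fin 2))) ≫
                η.app (DeltaRes.mk 0))
              (by
                simp only [Category.assoc, ← η.naturality]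
                simp only [← Category.assoc]
                rw [equalizer.condition]) := by
  refine ⟨fun B => DeltaRes.isoEq B, ?_⟩
  intro B B' η
  apply equalizer.hom_ext
  simp [DeltaRes.isoEq]
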